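/- arXiv:cs/0312045 — 2 statements merged into one kernel-verified Lean document; each statement's English description precedes it below -/
import Mathlib

section
/- Let Ω be a program with weight constraints and let Π₂ be the set of rules ⊥ ← not [C₀], [C₁],…,[C_n] for every rule C₀ ← C₁,…,C_n of Ω. Then for any consistent set Z of literals, Z ⊨ Ω if and only if Z ⊨ Π₂. -/
open Classical

/-- A literal: a propositional atom `a` or its classical negation `¬ a`. -/
inductive Lit (α : Type) where
  | pos : α → Lit α
  | neg : α → Lit α

/-- The atom of a literal. -/
def Lit.atom {α : Type} : Lit α → α
  | .pos a => a
  | .neg a => a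

/-- Mapping literals along a map of atoms. -/
def Lit.map {α β : Type} (f : α → β) : Lit α → Lit β
  | .pos a => .pos (f a)
  | .neg a => .neg (f a)

/-- A set of literals is consistent if it contains no pair `a`, `¬ a`. -/
def LitConsistent {α : Type} (Z : Set (Lit α)) : Prop :=
  ∀ a : α, ¬(Lit.pos a ∈ Z ∧ Lit.neg a ∈ Z)

/-- Formulas (nested expressions): elementary formulas are literals, `⊥` and `⊤`;
formulas are built from them using negation as failure `naf`, conjunction `conj`
and disjunction `disj`. -/
inductive Formula (α : Type) where
  | lit : Lit α → Formula α
  | fbot : Formula α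
  | ftop : Formula α
  | naf : Formula α → Formula α
  | conj : Formula α → Formula α → Formula α
  | disj : Formula α → Formula α → Formula α

/-- Satisfaction of a formula by a set of literals. -/
def Formula.sat {α : Type} (Z : Set (Lit α)) : Formula α → Prop
  | .lit l => l ∈ Z
  | .fbot => False
  | .ftop => True
  | .naf F => ¬ F.sat Z
  | .conj F G => F.sat Z ∧ G.sat Z
  | .disj F G => F.sat Z ∨ G.sat Z

/-- A rule with nested expressions: `head ← body`. -/
structure NRule (α : Type) where
  head : Formula α
  body : Formula α

/-- `Z` satisfies a program (a set of rules). -/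
def progSat {α : Type} (Z : Set (Lit α)) (P : Set (NRule α)) : Prop :=
  ∀ r ∈ P, r.body.sat Z → r.head.sat Z

/-- The reduct `F^Z` of a formula relative to a set of literals `Z`. -/
noncomputable def Formula.reduct {α : Type} (Z : Set (Lit α)) : Formula α → Formula α
  | .lit l => .lit l
  | .fbot => .fbot
  | .ftop => .ftop
  | .naf F => if F.sat Z then .fbot else .ftop
  | .conj F G => .conj (F.reduct Z) (G.reduct Z)
  | .disj F G => .disj (F.reduct Z) (G.reduct Z)

/-- The reduct `Π^Z` of a program. -/
noncomputable def progReduct {α : Type} (Z : Set (Lit α)) (P : Set (NRule α)) : Set (NRule α) :=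
  (fun r : NRule α => NRule.mk (r.head.reduct Z) (r.body.reduct Z)) '' P

/-- `Z` is minimal (under inclusion) among the consistent sets of literals satisfying `P`. -/
def MinimalSat {α : Type} (Z : Set (Lit α)) (P : Set (NRule α)) : Prop :=
  LitConsistent Z ∧ progSat Z P ∧
    ∀ Z' : Set (Lit α), LitConsistent Z' → progSat Z' P → Z' ⊆ Z → Z' = Z

/-- `Z` is an answer set for a program `P` with nested expressions:
`Z` is minimal among the consistent sets satisfying the reduct `P^Z`. -/
def AnswerSet {α : Type} (Z : Set (Lit α)) (P : Set (NRule α)) : Prop :=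
  MinimalSat Z (progReduct Z P)

/-- Strong equivalence of programs with nested expressions. -/
def StrongEq {α : Type} (P₁ P₂ : Set (NRule α)) : Prop :=
  ∀ P : Set (NRule α), ∀ Z : Set (Lit α), AnswerSet Z (P₁ ∪ P) ↔ AnswerSet Z (P₂ ∪ P)

/-- Multiple conjunction (the empty conjunction is `⊤`). -/
def bigConj {α : Type} : List (Formula α) → Formula α
  | [] => .ftop
  | F :: Fs => .conj F (bigConj Fs)

/-- Multiple disjunction (the empty disjunction is `⊥`). -/
def bigDisj {α : Type} : List (Formula α) → Formula α
  | [] => .fbot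
  | F :: Fs => .disj F (bigDisj Fs)

/-- `⟨F₁,…,F_n⟩:X`: the disjunction over `I ∈ X` of the conjunctions of the `Fᵢ`, `i ∈ I`. -/
noncomputable def angled {α : Type} {n : ℕ} (F : Fin n → Formula α) (X : Finset (Finset (Fin n))) :
    Formula α :=
  bigDisj (X.toList.map fun I => bigConj (I.toList.map F))
/-- A rule element: a literal (positive rule element) or a literal
prefixed with negation as failure (negative rule element). -/
inductive RElem (α : Type) where
  | pos : Lit α → RElem α
  | neg : Lit α → RElem α

/-- Satisfaction of a rule element by a set of literals. -/
def RElem.sat {α : Type} (Z : Set (Lit α)) : RElem α → Prop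
  | .pos l => l ∈ Z
  | .neg l => l ∉ Z

/-- Whether a rule element is negative. -/
def RElem.isNegB {α : Type} : RElem α → Bool
  | .pos _ => false
  | .neg _ => true

/-- The sum of the weights of the entries of `S` that are satisfied by `Z`. -/
noncomputable def weightSum {α : Type} (Z : Set (Lit α)) (S : List (RElem α × ℝ)) : ℝ :=
  (S.map fun p => if p.1.sat Z then p.2 else 0).sum

/-- A weight constraint `L ≤ {c₁=w₁,…,c_m=w_m} ≤ U` with nonnegative weights;
`L` and `U` may be `−∞`/`+∞`. -/
structure WConstraint (α : Type) where
  L : EReal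
  S : List (RElem α × ℝ)
  U : EReal
  nonneg : ∀ p ∈ S, (0 : ℝ) ≤ p.2

/-- `Z` satisfies the weight constraint `L ≤ S ≤ U`. -/
def WConstraint.sat {α : Type} (Z : Set (Lit α)) (C : WConstraint α) : Prop :=
  C.L ≤ (weightSum Z C.S : EReal) ∧ (weightSum Z C.S : EReal) ≤ C.U

/-- A rule with weight constraints, `C₀ ← C₁,…,C_n`. -/
structure WRule (α : Type) where
  head : WConstraint α
  body : List (WConstraint α)

/-- `Z` satisfies a program with weight constraints. -/
def wProgSat {α : Type} (Z : Set (Lit α)) (Ω : Set (WRule α)) : Prop :=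
  ∀ R ∈ Ω, (∀ C ∈ R.body, C.sat Z) → R.head.sat Z

/-- A weight constraint of the form `L ≤ S` (no upper bound), with nonnegative weights. -/
structure LConstraint (α : Type) where
  L : EReal
  S : List (RElem α × ℝ)
  nonneg : ∀ p ∈ S, (0 : ℝ) ≤ p.2

/-- Satisfaction of a lower-bound constraint (by an arbitrary set of literals). -/
def LConstraint.sat {α : Type} (Z : Set (Lit α)) (C : LConstraint α) : Prop :=
  C.L ≤ (weightSum Z C.S : EReal)

/-- A Horn rule: a literal as head, lower-bound constraints as body. -/
structure HornRule (α : Type) where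
  head : Lit α
  body : List (LConstraint α)

/-- Satisfaction of a set of Horn rules by an arbitrary set of literals. -/
def hornSat {α : Type} (Z : Set (Lit α)) (P : Set (HornRule α)) : Prop :=
  ∀ r ∈ P, (∀ C ∈ r.body, C.sat Z) → r.head ∈ Z

/-- The deductive closure of a set of Horn rules: its unique minimal satisfying
set of literals (the intersection of all satisfying sets). -/
def cl {α : Type} (P : Set (HornRule α)) : Set (Lit α) :=
  ⋂₀ {Z : Set (Lit α) | hornSat Z P}

/-- The sum of the weights of the negative entries of `S` satisfied by `Z`. -/
noncomputable def negSatWeight {α : Type} (Z : Set (Lit α)) (S : List (RElem α × ℝ)) : ℝ :=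
  (S.map fun p => if p.1.isNegB = true ∧ p.1.sat Z then p.2 else 0).sum

/-- The reduct `(L ≤ S)^Z` of a lower-bound constraint: drop the negative entries
of `S` and decrease `L` by the total weight of the negative entries satisfied by `Z`. -/
noncomputable def LConstraint.reduct {α : Type} (Z : Set (Lit α)) (C : LConstraint α) :
    LConstraint α :=
  ⟨C.L - ((negSatWeight Z C.S : ℝ) : EReal),
   C.S.filter (fun p => !p.1.isNegB),
   fun p hp => C.nonneg p (List.mem_of_mem_filter hp)⟩

/-- The lower-bound part `L ≤ S` of a weight constraint `L ≤ S ≤ U`. -/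
def WConstraint.lower {α : Type} (C : WConstraint α) : LConstraint α :=
  ⟨C.L, C.S, C.nonneg⟩

/-- The positive rule elements (as literals) occurring in `S`. -/
def posElems {α : Type} (S : List (RElem α × ℝ)) : Set (Lit α) :=
  {l : Lit α | ∃ w : ℝ, (RElem.pos l, w) ∈ S}

/-- The reduct `Ω^Z` of a program with weight constraints: for each rule
`L₀≤S₀≤U₀ ← C₁,…,C_n` whose upper bounds are all satisfied by `Z`, the Horn rules
`l ← C₁^Z,…,C_n^Z` for all positive rule elements `l` of `S₀` with `l ∈ Z`. -/
noncomputable def wProgReduct {α : Type} (Z : Set (Lit α)) (Ω : Set (WRule α)) :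
    Set (HornRule α) :=
  { r : HornRule α | ∃ R ∈ Ω,
      (∀ C ∈ R.body, (weightSum Z C.S : EReal) ≤ C.U) ∧
      r.head ∈ posElems R.head.S ∧ r.head ∈ Z ∧
      r.body = R.body.map (fun C => C.lower.reduct Z) }

/-- `Z` is an answer set for the program `Ω` with weight constraints. -/
def WAnswerSet {α : Type} (Z : Set (Lit α)) (Ω : Set (WRule α)) : Prop :=
  LitConsistent Z ∧ wProgSat Z Ω ∧ cl (wProgReduct Z Ω) = Z

/-- Strong equivalence of programs with weight constraints. -/
def WStrongEq {α : Type} (Ω₁ Ω₂ : Set (WRule α)) : Prop :=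
  ∀ Ω : Set (WRule α), ∀ Z : Set (Lit α), WAnswerSet Z (Ω₁ ∪ Ω) ↔ WAnswerSet Z (Ω₂ ∪ Ω)

/-- A rule element as a formula: `l` becomes the literal `l`, `not l` becomes `naf l`. -/
def RElem.toFormula {α : Type} : RElem α → Formula α
  | .pos l => .lit l
  | .neg l => .naf (.lit l)

/-- The translation `[L ≤ S]`: the formula `⟨c₁,…,c_m⟩:{I : L ≤ Σ_{i∈I} wᵢ}`. -/
noncomputable def trLower {α : Type} (L : EReal) (S : List (RElem α × ℝ)) : Formula α :=
  angled (fun i : Fin S.length => (S.get i).1.toFormula)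
    (Finset.univ.filter fun I : Finset (Fin S.length) =>
      L ≤ ((∑ i ∈ I, (S.get i).2 : ℝ) : EReal))

/-- The translation `[S ≤ U]`: the formula `not ⟨c₁,…,c_m⟩:{I : U < Σ_{i∈I} wᵢ}`. -/
noncomputable def trUpper {α : Type} (S : List (RElem α × ℝ)) (U : EReal) : Formula α :=
  .naf (angled (fun i : Fin S.length => (S.get i).1.toFormula)
    (Finset.univ.filter fun I : Finset (Fin S.length) =>
      U < ((∑ i ∈ I, (S.get i).2 : ℝ) : EReal)))

/-- The translation `[L ≤ S ≤ U] = [L ≤ S],[S ≤ U]`. -/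
noncomputable def trWC {α : Type} (C : WConstraint α) : Formula α :=
  .conj (trLower C.L C.S) (trUpper C.S C.U)

/-- The formulas `l ; not l` for the positive rule elements `l` of `S`, in order. -/
def choiceFmls {α : Type} (S : List (RElem α × ℝ)) : List (Formula α) :=
  S.filterMap fun p =>
    match p.1 with
    | RElem.pos l => some (Formula.disj (.lit l) (.naf (.lit l)))
    | RElem.neg _ => none

/-- The translation of a rule with weight constraints `C₀ ← C₁,…,C_n`:
`(l₁; not l₁),…,(l_p; not l_p),[C₀] ← [C₁],…,[C_n]`. -/
noncomputable def trRule {α : Type} (R : WRule α) : NRule α :=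
  ⟨bigConj (choiceFmls R.head.S ++ [trWC R.head]), bigConj (R.body.map trWC)⟩

/-- The translation `[Ω]` of a program with weight constraints. -/
noncomputable def trProg {α : Type} (Ω : Set (WRule α)) : Set (NRule α) :=
  trRule '' Ω

/-- The nondisjunctive translation `[Ω]^{nd}`: each rule `C₀ ← C₁,…,C_n` is replaced
by the rules `l ← not not l, [C₁],…,[C_n]` for all positive rule elements `l` of `C₀`
together with `⊥ ← not [C₀], [C₁],…,[C_n]`. -/
noncomputable def ndTrans {α : Type} (Ω : Set (WRule α)) : Set (NRule α) :=
  { r : NRule α | ∃ R ∈ Ω,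
      (∃ l ∈ posElems R.head.S,
        r = ⟨.lit l, bigConj (.naf (.naf (.lit l)) :: R.body.map trWC)⟩) ∨
      r = ⟨.fbot, bigConj (.naf (trWC R.head) :: R.body.map trWC)⟩ }

/-- `Π₂`: the rules `⊥ ← not [C₀], [C₁],…,[C_n]` for all rules `C₀ ← C₁,…,C_n` of `Ω`. -/
noncomputable def constraintPart {α : Type} (Ω : Set (WRule α)) : Set (NRule α) :=
  { r : NRule α | ∃ R ∈ Ω,
      r = ⟨.fbot, bigConj (.naf (trWC R.head) :: R.body.map trWC)⟩ }

/-!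
As the weights are nonnegative, the index sets `I` whose total weight is at least `L`, or exceeds
`U`, form an upper set. Hence the disjunction over these `I` holds in `Z` if and only if the largest
candidate, the set of all indices satisfied by `Z`, is one of them; its total weight is the sum that
the constraint tests, so `[C]` is satisfied by the same sets of literals as `C`. Classically,
`⊥ ← not [C₀], [C₁], …, [C_n]` then says that `C₁, …, C_n` imply `C₀`.
-/

section

variable {α : Type} {Z : Set (Lit α)}

theorem sat_bigConj {Fs : List (Formula α)} : (bigConj Fs).sat Z ↔ ∀ F ∈ Fs, F.sat Z := by
  induction Fs with
  | nil => simp [bigConj, Formula.sat]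
  | cons F Fs ih => simp [bigConj, Formula.sat, ih]

theorem sat_bigDisj {Fs : List (Formula α)} : (bigDisj Fs).sat Z ↔ ∃ F ∈ Fs, F.sat Z := by
  induction Fs with
  | nil => simp [bigDisj, Formula.sat]
  | cons F Fs ih => simp [bigDisj, Formula.sat, ih]

theorem sat_angled {n : ℕ} {F : Fin n → Formula α} {X : Finset (Finset (Fin n))} :
    (angled F X).sat Z ↔ ∃ I ∈ X, ∀ i ∈ I, (F i).sat Z := by
  simp [angled, sat_bigDisj, sat_bigConj]

theorem sat_angled_iff_mem_of_isUpperSet {n : ℕ} {F : Fin n → Formula α}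
    {X : Finset (Finset (Fin n))} (hX : IsUpperSet (X : Set (Finset (Fin n)))) :
    (angled F X).sat Z ↔ Finset.univ.filter (fun i => (F i).sat Z) ∈ X := by
  rw [sat_angled]
  constructor
  · rintro ⟨I, hIX, hI⟩
    have hsub : I ⊆ Finset.univ.filter (fun i => (F i).sat Z) := fun i hi =>
      Finset.mem_filter.2 ⟨Finset.mem_univ i, hI i hi⟩
    exact hX hsub hIX
  · exact fun h => ⟨_, h, fun i hi => (Finset.mem_filter.1 hi).2⟩

theorem sat_toFormula {c : RElem α} : c.toFormula.sat Z ↔ c.sat Z := by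
  cases c <;> rfl

theorem weightSum_eq_sum_filter (Z : Set (Lit α)) (S : List (RElem α × ℝ)) :
    weightSum Z S = ∑ i : Fin S.length with (S.get i).1.toFormula.sat Z, (S.get i).2 := by
  simp only [sat_toFormula, Finset.sum_filter]
  exact (Fin.sum_univ_fun_getElem S fun p => if p.1.sat Z then p.2 else 0).symm

theorem monotone_coe_sum_weights {S : List (RElem α × ℝ)} (hS : ∀ p ∈ S, (0 : ℝ) ≤ p.2) :
    Monotone fun I : Finset (Fin S.length) => ((∑ i ∈ I, (S.get i).2 : ℝ) : EReal) :=
  EReal.coe_strictMono.monotone.comp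
    (Finset.sum_mono_set_of_nonneg fun i => hS _ (S.get_mem i))

theorem sat_angled_sum_weights_mem {S : List (RElem α × ℝ)} (hS : ∀ p ∈ S, (0 : ℝ) ≤ p.2)
    {T : Set EReal} (hT : IsUpperSet T) :
    (angled (fun i : Fin S.length => (S.get i).1.toFormula)
      (Finset.univ.filter fun I => ((∑ i ∈ I, (S.get i).2 : ℝ) : EReal) ∈ T)).sat Z ↔
      (weightSum Z S : EReal) ∈ T := by
  refine (sat_angled_iff_mem_of_isUpperSet ?_).trans ?_
  · rw [Finset.coe_filter_univ]
    exact hT.preimage (monotone_coe_sum_weights hS)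
  · rw [Finset.mem_filter_univ, weightSum_eq_sum_filter]

theorem sat_trLower {L : EReal} {S : List (RElem α × ℝ)} (hS : ∀ p ∈ S, (0 : ℝ) ≤ p.2) :
    (trLower L S).sat Z ↔ L ≤ weightSum Z S := by
  simpa only [trLower, Set.mem_Ici] using sat_angled_sum_weights_mem hS (isUpperSet_Ici L)

theorem sat_trUpper {S : List (RElem α × ℝ)} {U : EReal} (hS : ∀ p ∈ S, (0 : ℝ) ≤ p.2) :
    (trUpper S U).sat Z ↔ weightSum Z S ≤ U := by
  rw [trUpper, Formula.sat, ← not_lt]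
  simpa only [Set.mem_Ioi] using not_congr (sat_angled_sum_weights_mem hS (isUpperSet_Ioi U))

theorem sat_trWC {C : WConstraint α} : (trWC C).sat Z ↔ C.sat Z :=
  and_congr (sat_trLower C.nonneg) (sat_trUpper C.nonneg)

theorem sat_bigConj_map_trWC {Cs : List (WConstraint α)} :
    (bigConj (Cs.map trWC)).sat Z ↔ ∀ C ∈ Cs, C.sat Z := by
  simp only [sat_bigConj, List.forall_mem_map, sat_trWC]

theorem progSat_constraintPart {Ω : Set (WRule α)} :
    progSat Z (constraintPart Ω) ↔
      ∀ R ∈ Ω, ¬ (¬ (trWC R.head).sat Z ∧ (bigConj (R.body.map trWC)).sat Z) := by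
  constructor
  · exact fun h R hR => h _ ⟨R, hR, rfl⟩
  · rintro h _ ⟨R, hR, rfl⟩
    exact h R hR

theorem wProgSat_iff_constraintPart_general (Ω : Set (WRule α)) (Z : Set (Lit α)) :
    wProgSat Z Ω ↔ progSat Z (constraintPart Ω) := by
  rw [progSat_constraintPart]
  refine forall₂_congr fun R _ => ?_
  rw [sat_trWC, sat_bigConj_map_trWC, not_and', not_not]

end

/-- For any consistent set `Z` of literals, `Z ⊨ Ω` iff `Z ⊨ Π₂`. -/
theorem wProgSat_iff_constraintPart (Ω : Set (WRule ℕ)) (Z : Set (Lit ℕ))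
    (hZ : LitConsistent Z) :
    wProgSat Z Ω ↔ progSat Z (constraintPart Ω) :=
  wProgSat_iff_constraintPart_general Ω Z
end

section
/- (Lemma on Explicit Definitions) Let Π be a program with nested expressions, let Q be a set of atoms that do not occur in Π, and for every q ∈ Q let Def(q) be a formula that contains no atoms from Q. Then the map Z ↦ Z ∖ Q (removing from Z the atoms belonging to Q) is a bijection from the set of answer sets of Π ∪ {q ← Def(q) : q ∈ Q} onto the set of answer sets of Π. -/
open Classical

/-- The atoms occurring in a formula. -/
def Formula.atoms {α : Type} : Formula α → Set α
  | .lit l => {l.atom}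
  | .fbot => ∅
  | .ftop => ∅
  | .naf F => F.atoms
  | .conj F G => F.atoms ∪ G.atoms
  | .disj F G => F.atoms ∪ G.atoms

/-!
Both `P` and the definitions `Def q` avoid `Q`, so their reducts relative to `Z` depend only on
`W = Z \ Q`. It therefore suffices to compare minimal models of the reducts. There, `Z` satisfies
`P ∪ {q ← Def q}` exactly when `W` satisfies `P` and `Z` contains the extension of `W` by those
`q` with `W ⊨ Def q`. This extension is monotone in `W` because reducts contain no negation as
failure, so the minimal models `Z` are precisely the extensions of the minimal models `W` of `P`,
and forming the extension is the inverse of removing `Q`.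
-/

/-- The atoms occurring in a program. -/
def progAtoms {α : Type} (P : Set (NRule α)) : Set α :=
  ⋃ r ∈ P, r.head.atoms ∪ r.body.atoms

/-- The program `{q ← Def q : q ∈ Q}` of explicit definitions of the atoms in `Q`. -/
def explicitDefinitions {α : Type} (Q : Set α) (Def : α → Formula α) : Set (NRule α) :=
  {r | ∃ q ∈ Q, r = ⟨.lit (.pos q), Def q⟩}

/-- The extension of a set of literals by the atoms `q ∈ Q` whose definition `Def q` it satisfies.
It is meant for sets without literals over `Q`, on which it inverts the removal of `Q`. -/
def definitionalExtension {α : Type} (Q : Set α) (Def : α → Formula α) (W : Set (Lit α)) :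
    Set (Lit α) :=
  W ∪ Lit.pos '' {q ∈ Q | (Def q).sat W}

section

variable {α : Type} {P : Set (NRule α)} {Q : Set α} {Def : α → Formula α} {W Z : Set (Lit α)}

theorem LitConsistent.mono (hZ : LitConsistent Z) (hWZ : W ⊆ Z) : LitConsistent W :=
  fun a ha ↦ hZ a (ha.imp (@hWZ _) (@hWZ _))

namespace Formula

theorem sat_sdiff_iff {F : Formula α} (hF : Disjoint F.atoms Q) :
    F.sat (Z \ Lit.atom ⁻¹' Q) ↔ F.sat Z := by
  induction F with
  | lit l => exact and_iff_left fun hl ↦ Set.disjoint_left.1 hF rfl hl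
  | fbot | ftop => rfl
  | naf F ih => exact not_congr (ih hF)
  | conj F G ihF ihG =>
    obtain ⟨hF, hG⟩ := Set.disjoint_union_left.1 hF
    exact and_congr (ihF hF) (ihG hG)
  | disj F G ihF ihG =>
    obtain ⟨hF, hG⟩ := Set.disjoint_union_left.1 hF
    exact or_congr (ihF hF) (ihG hG)

theorem reduct_sdiff {F : Formula α} (hF : Disjoint F.atoms Q) :
    F.reduct (Z \ Lit.atom ⁻¹' Q) = F.reduct Z := by
  induction F with
  | lit | fbot | ftop => rfl
  | naf F => simp only [reduct, sat_sdiff_iff (F := F) hF]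
  | conj F G ihF ihG | disj F G ihF ihG =>
    obtain ⟨hF, hG⟩ := Set.disjoint_union_left.1 hF
    simp only [reduct, ihF hF, ihG hG]

theorem atoms_reduct_subset (F : Formula α) : (F.reduct Z).atoms ⊆ F.atoms := by
  induction F with
  | lit | fbot | ftop => exact subset_rfl
  | naf F => simp only [reduct]; split <;> exact Set.empty_subset _
  | conj F G ihF ihG | disj F G ihF ihG => exact Set.union_subset_union ihF ihG

theorem sat_reduct_self (F : Formula α) : (F.reduct Z).sat Z ↔ F.sat Z := by
  induction F with
  | lit | fbot | ftop => rfl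
  | naf F => by_cases h : F.sat Z <;> simp [reduct, sat, h]
  | conj F G ihF ihG => exact and_congr ihF ihG
  | disj F G ihF ihG => exact or_congr ihF ihG

theorem monotone_sat_reduct (F : Formula α) : Monotone fun W ↦ (F.reduct Z).sat W := by
  induction F with
  | lit l => exact fun _ _ h hl ↦ h hl
  | fbot | ftop => exact monotone_const
  | naf F => simp only [reduct]; split <;> exact monotone_const
  | conj F G ihF ihG => exact fun _ _ h ↦ And.imp (ihF h) (ihG h)
  | disj F G ihF ihG => exact fun _ _ h ↦ Or.imp (ihF h) (ihG h)

end Formula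

theorem disjoint_progAtoms_iff :
    Disjoint (progAtoms P) Q ↔
      ∀ r ∈ P, Disjoint r.head.atoms Q ∧ Disjoint r.body.atoms Q := by
  simp only [progAtoms, Set.disjoint_iUnion_left, Set.disjoint_union_left]

theorem progSat_union_iff {P₁ P₂ : Set (NRule α)} :
    progSat Z (P₁ ∪ P₂) ↔ progSat Z P₁ ∧ progSat Z P₂ := by
  simp only [progSat, Set.mem_union, or_imp, forall_and]

theorem progSat_sdiff_iff (hP : Disjoint (progAtoms P) Q) :
    progSat (Z \ Lit.atom ⁻¹' Q) P ↔ progSat Z P := by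
  rw [disjoint_progAtoms_iff] at hP
  refine forall₂_congr fun r hr ↦ ?_
  rw [Formula.sat_sdiff_iff (hP r hr).1, Formula.sat_sdiff_iff (hP r hr).2]

theorem progReduct_sdiff (hP : Disjoint (progAtoms P) Q) :
    progReduct (Z \ Lit.atom ⁻¹' Q) P = progReduct Z P := by
  rw [disjoint_progAtoms_iff] at hP
  refine Set.image_congr fun r hr ↦ ?_
  rw [Formula.reduct_sdiff (hP r hr).1, Formula.reduct_sdiff (hP r hr).2]

theorem progAtoms_progReduct_subset (P : Set (NRule α)) :
    progAtoms (progReduct Z P) ⊆ progAtoms P := by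
  simp only [progAtoms, progReduct, Set.biUnion_image]
  exact Set.iUnion₂_mono fun r _ ↦
    Set.union_subset_union r.head.atoms_reduct_subset r.body.atoms_reduct_subset

theorem progReduct_union_explicitDefinitions :
    progReduct Z (P ∪ explicitDefinitions Q Def) =
      progReduct Z P ∪ explicitDefinitions Q fun q ↦ (Def q).reduct Z := by
  rw [progReduct, Set.image_union]
  congr 1
  ext r
  constructor
  · rintro ⟨_, ⟨q, hq, rfl⟩, rfl⟩
    exact ⟨q, hq, rfl⟩
  · rintro ⟨q, hq, rfl⟩
    exact ⟨_, ⟨q, hq, rfl⟩, rfl⟩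

theorem MinimalSat.disjoint_atoms (hW : MinimalSat W P) (hP : Disjoint (progAtoms P) Q) :
    Disjoint W (Lit.atom ⁻¹' Q) := by
  obtain ⟨hcons, hsat, hmin⟩ := hW
  exact sdiff_eq_left.1 <|
    hmin _ (hcons.mono Set.sdiff_subset) ((progSat_sdiff_iff hP).2 hsat) Set.sdiff_subset

theorem definitionalExtension_sdiff :
    definitionalExtension Q Def W \ Lit.atom ⁻¹' Q = W \ Lit.atom ⁻¹' Q := by
  have hnew : Lit.pos '' {q ∈ Q | (Def q).sat W} ⊆ Lit.atom ⁻¹' Q :=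
    Set.image_subset_iff.2 fun _ hq ↦ hq.1
  rw [definitionalExtension, Set.union_sdiff_distrib, Set.sdiff_eq_empty.2 hnew, Set.union_empty]

theorem monotone_definitionalExtension (hmono : ∀ q ∈ Q, Monotone fun W ↦ (Def q).sat W) :
    Monotone (definitionalExtension Q Def) :=
  fun _ _ h ↦ Set.union_subset_union h <| Set.image_mono fun q hq ↦ ⟨hq.1, hmono q hq.1 h hq.2⟩

theorem litConsistent_definitionalExtension (hW : LitConsistent W)
    (hWQ : Disjoint W (Lit.atom ⁻¹' Q)) : LitConsistent (definitionalExtension Q Def W) := by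
  rintro a ⟨hpos | ⟨q, hq, hqa⟩, hneg | ⟨_, _, hne⟩⟩
  · exact hW a ⟨hpos, hneg⟩
  · cases hne
  · cases hqa
    exact Set.disjoint_left.1 hWQ hneg hq.1
  · cases hne

theorem progSat_union_explicitDefinitions_iff (hP : Disjoint (progAtoms P) Q)
    (hDef : ∀ q ∈ Q, Disjoint (Def q).atoms Q) :
    progSat Z (P ∪ explicitDefinitions Q Def) ↔
      progSat (Z \ Lit.atom ⁻¹' Q) P ∧
        definitionalExtension Q Def (Z \ Lit.atom ⁻¹' Q) ⊆ Z := by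
  have hdefs : progSat Z (explicitDefinitions Q Def) ↔
      definitionalExtension Q Def (Z \ Lit.atom ⁻¹' Q) ⊆ Z := by
    rw [definitionalExtension, Set.union_subset_iff, and_iff_right Set.sdiff_subset,
      Set.image_subset_iff]
    constructor
    · rintro h q ⟨hq, hsat⟩
      exact h _ ⟨q, hq, rfl⟩ ((Formula.sat_sdiff_iff (hDef q hq)).1 hsat)
    · rintro h _ ⟨q, hq, rfl⟩ hsat
      exact h ⟨hq, (Formula.sat_sdiff_iff (hDef q hq)).2 hsat⟩
  rw [progSat_union_iff, progSat_sdiff_iff hP, hdefs]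

theorem progSat_definitionalExtension (hP : Disjoint (progAtoms P) Q)
    (hDef : ∀ q ∈ Q, Disjoint (Def q).atoms Q) (hWQ : Disjoint W (Lit.atom ⁻¹' Q))
    (hW : progSat W P) :
    progSat (definitionalExtension Q Def W) (P ∪ explicitDefinitions Q Def) := by
  rw [progSat_union_explicitDefinitions_iff hP hDef, definitionalExtension_sdiff,
    hWQ.sdiff_eq_left]
  exact ⟨hW, subset_rfl⟩

theorem minimalSat_sdiff_of_union_explicitDefinitions (hP : Disjoint (progAtoms P) Q)
    (hDef : ∀ q ∈ Q, Disjoint (Def q).atoms Q)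
    (hmono : ∀ q ∈ Q, Monotone fun W ↦ (Def q).sat W)
    (hZ : MinimalSat Z (P ∪ explicitDefinitions Q Def)) :
    MinimalSat (Z \ Lit.atom ⁻¹' Q) P ∧
      definitionalExtension Q Def (Z \ Lit.atom ⁻¹' Q) = Z := by
  obtain ⟨hcons, hsat, hmin⟩ := hZ
  obtain ⟨hsatP, hext⟩ := (progSat_union_explicitDefinitions_iff hP hDef).1 hsat
  have hcons' : LitConsistent (Z \ Lit.atom ⁻¹' Q) := hcons.mono Set.sdiff_subset
  have ext_eq {W} (hW : LitConsistent W) (hWP : progSat W P) (hWZ : W ⊆ Z \ Lit.atom ⁻¹' Q) :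
      definitionalExtension Q Def W = Z := by
    have hWQ : Disjoint W (Lit.atom ⁻¹' Q) := Set.disjoint_sdiff_left.mono_left hWZ
    exact hmin _ (litConsistent_definitionalExtension hW hWQ)
      (progSat_definitionalExtension hP hDef hWQ hWP)
      ((monotone_definitionalExtension hmono hWZ).trans hext)
  refine ⟨⟨hcons', hsatP, fun W hW hWP hWZ ↦ ?_⟩, ext_eq hcons' hsatP subset_rfl⟩
  have hWQ : Disjoint W (Lit.atom ⁻¹' Q) := Set.disjoint_sdiff_left.mono_left hWZ
  rw [← ext_eq hW hWP hWZ, definitionalExtension_sdiff, hWQ.sdiff_eq_left]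

theorem minimalSat_definitionalExtension (hP : Disjoint (progAtoms P) Q)
    (hDef : ∀ q ∈ Q, Disjoint (Def q).atoms Q) (hW : MinimalSat W P) :
    MinimalSat (definitionalExtension Q Def W) (P ∪ explicitDefinitions Q Def) := by
  have hWQ := hW.disjoint_atoms hP
  obtain ⟨hcons, hsat, hmin⟩ := hW
  refine ⟨litConsistent_definitionalExtension hcons hWQ,
    progSat_definitionalExtension hP hDef hWQ hsat, fun Z hZ hZsat hZW ↦ hZW.antisymm ?_⟩
  obtain ⟨hZP, hext⟩ := (progSat_union_explicitDefinitions_iff hP hDef).1 hZsat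
  have hsub : Z \ Lit.atom ⁻¹' Q ⊆ W := by
    calc Z \ Lit.atom ⁻¹' Q
      _ ⊆ definitionalExtension Q Def W \ Lit.atom ⁻¹' Q := Set.sdiff_subset_sdiff_left hZW
      _ = W := definitionalExtension_sdiff.trans hWQ.sdiff_eq_left
  rwa [hmin _ (hZ.mono Set.sdiff_subset) hZP hsub] at hext

theorem minimalSat_union_explicitDefinitions_iff (hP : Disjoint (progAtoms P) Q)
    (hDef : ∀ q ∈ Q, Disjoint (Def q).atoms Q)
    (hmono : ∀ q ∈ Q, Monotone fun W ↦ (Def q).sat W) :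
    MinimalSat Z (P ∪ explicitDefinitions Q Def) ↔
      MinimalSat (Z \ Lit.atom ⁻¹' Q) P ∧
        definitionalExtension Q Def (Z \ Lit.atom ⁻¹' Q) = Z :=
  ⟨minimalSat_sdiff_of_union_explicitDefinitions hP hDef hmono,
    fun ⟨hW, hZ⟩ ↦ hZ ▸ minimalSat_definitionalExtension hP hDef hW⟩

theorem AnswerSet.disjoint_atoms (hW : AnswerSet W P) (hP : Disjoint (progAtoms P) Q) :
    Disjoint W (Lit.atom ⁻¹' Q) :=
  MinimalSat.disjoint_atoms hW (hP.mono_left (progAtoms_progReduct_subset P))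

theorem definitionalExtension_reduct (hDef : ∀ q ∈ Q, Disjoint (Def q).atoms Q) :
    definitionalExtension Q (fun q ↦ (Def q).reduct Z) (Z \ Lit.atom ⁻¹' Q) =
      definitionalExtension Q Def (Z \ Lit.atom ⁻¹' Q) := by
  unfold definitionalExtension
  congr 2
  ext q
  refine and_congr_right fun hq ↦ ?_
  simp only [← Formula.reduct_sdiff (Z := Z) (hDef q hq), Formula.sat_reduct_self]

theorem answerSet_union_explicitDefinitions_iff (hP : Disjoint (progAtoms P) Q)
    (hDef : ∀ q ∈ Q, Disjoint (Def q).atoms Q) :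
    AnswerSet Z (P ∪ explicitDefinitions Q Def) ↔
      AnswerSet (Z \ Lit.atom ⁻¹' Q) P ∧
        definitionalExtension Q Def (Z \ Lit.atom ⁻¹' Q) = Z := by
  rw [AnswerSet, progReduct_union_explicitDefinitions, minimalSat_union_explicitDefinitions_iff
    (hP.mono_left (progAtoms_progReduct_subset P))
    (fun q hq ↦ (hDef q hq).mono_left (Def q).atoms_reduct_subset)
    (fun q _ ↦ (Def q).monotone_sat_reduct),
    definitionalExtension_reduct hDef, AnswerSet, progReduct_sdiff hP]

end

theorem explicit_definitions_lemma_general {α : Type} (P : Set (NRule α)) (Q : Set α)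
    (Def : α → Formula α)
    (hP : ∀ q ∈ Q, ∀ r ∈ P, q ∉ r.head.atoms ∧ q ∉ r.body.atoms)
    (hD : ∀ q ∈ Q, ∀ q' ∈ Q, q' ∉ (Def q).atoms) :
    Set.BijOn (fun Z : Set (Lit α) => {l ∈ Z | l.atom ∉ Q})
      {Z : Set (Lit α) |
        AnswerSet Z (P ∪ {r : NRule α | ∃ q ∈ Q, r = ⟨.lit (.pos q), Def q⟩})}
      {Z : Set (Lit α) | AnswerSet Z P} := by
  change Set.BijOn (· \ Lit.atom ⁻¹' Q) {Z | AnswerSet Z (P ∪ explicitDefinitions Q Def)} _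
  have hP' : Disjoint (progAtoms P) Q := disjoint_progAtoms_iff.2 fun r hr ↦
    ⟨Set.disjoint_right.2 fun q hq ↦ (hP q hq r hr).1,
      Set.disjoint_right.2 fun q hq ↦ (hP q hq r hr).2⟩
  have hDef q (hq : q ∈ Q) : Disjoint (Def q).atoms Q := Set.disjoint_right.2 (hD q hq)
  have key (Z) := answerSet_union_explicitDefinitions_iff (Z := Z) hP' hDef
  have sdiff_ext {W} (hW : AnswerSet W P) :
      definitionalExtension Q Def W \ Lit.atom ⁻¹' Q = W :=
    definitionalExtension_sdiff.trans (hW.disjoint_atoms hP').sdiff_eq_left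
  refine Set.InvOn.bijOn (f' := definitionalExtension Q Def)
    ⟨fun Z hZ ↦ ((key Z).1 hZ).2, fun W ↦ sdiff_ext⟩ (fun Z hZ ↦ ((key Z).1 hZ).1) fun W hW ↦ ?_
  refine (key _).2 ?_
  rw [sdiff_ext hW]
  exact ⟨hW, rfl⟩

/-- Lemma on Explicit Definitions: if the atoms of `Q` do not occur in `P` and the
formulas `Def q` contain no atoms from `Q`, then removing the atoms of `Q` is a
bijection from the answer sets of `P ∪ {q ← Def q : q ∈ Q}` onto the answer sets of `P`. -/
theorem explicit_definitions_lemma (P : Set (NRule ℕ)) (Q : Set ℕ) (Def : ℕ → Formula ℕ)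
    (hP : ∀ q ∈ Q, ∀ r ∈ P, q ∉ r.head.atoms ∧ q ∉ r.body.atoms)
    (hD : ∀ q ∈ Q, ∀ q' ∈ Q, q' ∉ (Def q).atoms) :
    Set.BijOn (fun Z : Set (Lit ℕ) => {l ∈ Z | l.atom ∉ Q})
      {Z : Set (Lit ℕ) |
        AnswerSet Z (P ∪ {r : NRule ℕ | ∃ q ∈ Q, r = ⟨.lit (.pos q), Def q⟩})}
      {Z : Set (Lit ℕ) | AnswerSet Z P} :=
  explicit_definitions_lemma_general P Q Def hP hD
end
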